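/- Let V be a set of n vertices and 1 ≤ p ≤ n-2 an integer. There exists a family Q of subsets of V of size O(p^3 · log(n/p)) such that for every pair of distinct vertices u, v ∈ V and every p-element subset W ⊆ V \ {u,v}, there is a set Q_i ∈ Q with u, v ∈ Q_i and W ∩ Q_i = ∅. Concretely, such a family exists of size at most ⌈e·p·(p+1)^2·ln(n^{2/p}·e·(n-2)/p)⌉. -/

import Mathlib

lemma qs_greedy {α β : Type*} [DecidableEq α] [DecidableEq β] [Fintype β] (w : β → ℝ) (hw : ∀ b, 0 ≤ w b)
    (hw1 : ∑ b, w b = 1) (R : α → β → Prop) [∀ a b, Decidable (R a b)] (S : Finset α) (q : ℝ) (hq1 : q ≤ 1)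
    (hq : ∀ a ∈ S, q ≤ ∑ b, if R a b then w b else 0) (k : ℕ) :
    ∃ F : Finset β, F.card ≤ k ∧
      ((S.filter (fun a => ∀ b ∈ F, ¬ R a b)).card : ℝ) ≤ S.card * (1 - q) ^ k := by
  induction k with
  | zero => exact ⟨∅, by simp, by simp⟩
  | succ k ih =>
    obtain ⟨F, hF, hc⟩ := ih
    set T := S.filter (fun a => ∀ b ∈ F, ¬ R a b) with hT
    have key : ∃ b : β, ((T.filter (fun a => ¬ R a b)).card : ℝ) ≤ T.card * (1 - q) := by
      by_contra! hcon
      have hex : ∃ b, 0 < w b := by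
        by_contra! h0
        have : ∑ b, w b ≤ 0 := Finset.sum_nonpos (fun b _ => h0 b)
        linarith
      obtain ⟨b0, hb0⟩ := hex
      have h1 : ∑ b, w b * (T.card * (1 - q)) < ∑ b, w b * ((T.filter (fun a => ¬ R a b)).card : ℝ) := by
        apply Finset.sum_lt_sum
        · intro b _
          exact mul_le_mul_of_nonneg_left (hcon b).le (hw b)
        · exact ⟨b0, Finset.mem_univ _, mul_lt_mul_of_pos_left (hcon b0) hb0⟩
      rw [← Finset.sum_mul, hw1, one_mul] at h1
      have h2 : ∑ b, w b * ((T.filter (fun a => ¬ R a b)).card : ℝ)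
          = ∑ a ∈ T, ∑ b, (w b - if R a b then w b else 0) := by
        rw [Finset.sum_comm]
        refine Finset.sum_congr rfl fun b _ => ?_
        rw [Finset.card_filter, Nat.cast_sum, Finset.mul_sum]
        refine Finset.sum_congr rfl fun a _ => ?_
        by_cases h : R a b <;> simp [h]
      have h3 : ∑ a ∈ T, ∑ b, (w b - if R a b then w b else 0) ≤ ∑ a ∈ T, (1 - q) := by
        refine Finset.sum_le_sum fun a ha => ?_
        rw [Finset.sum_sub_distrib, hw1]
        have := hq a (Finset.mem_filter.1 ha).1
        linarith
      rw [Finset.sum_const, nsmul_eq_mul] at h3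
      linarith
    obtain ⟨b, hb⟩ := key
    refine ⟨insert b F, (Finset.card_insert_le _ _).trans (by omega), ?_⟩
    have he : S.filter (fun a => ∀ c ∈ insert b F, ¬ R a c) = T.filter (fun a => ¬ R a b) := by
      ext a
      simp only [hT, Finset.mem_filter, Finset.forall_mem_insert]
      tauto
    rw [he, pow_succ, ← mul_assoc]
    exact hb.trans (mul_le_mul_of_nonneg_right hc (by linarith))

lemma qs_weight {V : Type*} [Fintype V] [DecidableEq V] (x : ℝ) (hx : 0 ≤ x) (hx1 : x ≤ 1)
    (u v : V) (huv : u ≠ v) (W : Finset V) (hu : u ∉ W) (hv : v ∉ W) :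
    x ^ 2 * (1 - x) ^ W.card ≤ ∑ Q : Finset V, if (u ∈ Q ∧ v ∈ Q ∧ Disjoint W Q) then
      (∏ _i ∈ Q, x) * (∏ _i ∈ Finset.univ \ Q, (1 - x)) else 0 := by
  have h := Finset.prod_add (fun i => if i ∈ W then 0 else x)
    (fun i => if i = u ∨ i = v then 0 else 1 - x) (Finset.univ : Finset V)
  have h1 : ∏ i : V, ((if i ∈ W then 0 else x) + (if i = u ∨ i = v then 0 else 1 - x))
      = x ^ 2 * (1 - x) ^ W.card := by
    have : ∀ i : V, ((if i ∈ W then 0 else x) + (if i = u ∨ i = v then 0 else 1 - x))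
      = (if i ∈ ({u, v} : Finset V) then x else 1) * (if i ∈ W then 1 - x else 1) := by
      intro i
      by_cases h1 : i ∈ W
      · have : i ≠ u := fun h => hu (h ▸ h1)
        have : i ≠ v := fun h => hv (h ▸ h1)
        simp [*]
      · by_cases h2 : i = u ∨ i = v <;> simp [h1, h2]
    rw [Finset.prod_congr rfl (fun i _ => this i), Finset.prod_mul_distrib]
    rw [Finset.prod_ite_mem, Finset.prod_ite_mem]
    simp [Finset.card_pair huv]
  rw [← h1, h, Finset.powerset_univ]
  refine Finset.sum_le_sum fun Q _ => ?_
  split_ifs with hc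
  · obtain ⟨h1, h2, h3⟩ := hc
    apply le_of_eq
    congr 1
    · refine Finset.prod_congr rfl fun i hi => ?_
      rw [if_neg (Finset.disjoint_right.1 h3 hi)]
    · refine Finset.prod_congr rfl fun i hi => ?_
      rw [if_neg]
      rintro (rfl | rfl) <;> simp_all
  · apply le_of_eq
    by_cases h1 : u ∈ Q
    · by_cases h2 : v ∈ Q
      · have : ¬ Disjoint W Q := fun h => hc ⟨h1, h2, h⟩
        obtain ⟨i, hi, hi'⟩ := Finset.not_disjoint_iff.1 this
        rw [Finset.prod_eq_zero hi' (by simp [hi]), zero_mul]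
      · rw [mul_comm, Finset.prod_eq_zero (i := v) (by simp [h2]) (by simp), zero_mul]
    · rw [mul_comm, Finset.prod_eq_zero (i := u) (by simp [h1]) (by simp), zero_mul]

lemma qs_prob (p : ℕ) (hp : 1 ≤ p) :
    1 / (Real.exp 1 * ((p : ℝ) + 1) ^ 2) ≤
      (1 / ((p : ℝ) + 1)) ^ 2 * (1 - 1 / ((p : ℝ) + 1)) ^ p := by
  have hp0 : (0 : ℝ) < p := by exact_mod_cast hp
  have h1 : (1 - 1 / ((p : ℝ) + 1)) = (1 + 1 / (p : ℝ))⁻¹ := by field_simp; ring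
  have h2 : (1 + 1 / (p : ℝ)) ^ p ≤ Real.exp 1 := by
    have := Real.add_one_le_exp (1 / (p : ℝ))
    calc (1 + 1 / (p : ℝ)) ^ p ≤ (Real.exp (1 / (p : ℝ))) ^ p := by
          apply pow_le_pow_left₀ (by positivity); linarith
      _ = Real.exp 1 := by rw [← Real.exp_nat_mul]; congr 1; field_simp
  have h3 : (Real.exp 1)⁻¹ ≤ ((1 + 1 / (p : ℝ)) ^ p)⁻¹ := by
    apply inv_anti₀ (by positivity) h2
  rw [h1, inv_pow]
  calc _ = (1 / ((p : ℝ) + 1)) ^ 2 * (Real.exp 1)⁻¹ := by field_simp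
    _ ≤ _ := by gcongr

lemma qs_choose (m p : ℕ) (hp : 1 ≤ p) :
    (m.choose p : ℝ) ≤ (Real.exp 1 * m / p) ^ p := by
  have hp0 : (0 : ℝ) < p := by exact_mod_cast hp
  have h1 : (m.choose p : ℝ) ≤ (m : ℝ) ^ p / p.factorial := Nat.choose_le_pow_div p m
  have h2 := Real.pow_div_factorial_le_exp (p : ℝ) hp0.le p
  refine h1.trans ?_
  have h3 : Real.exp p = Real.exp 1 ^ p := by rw [← Real.exp_nat_mul]; simp
  rw [h3] at h2
  rw [div_pow, mul_pow, le_div_iff₀ (by positivity)]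
  calc _ = ((p : ℝ) ^ p / p.factorial) * (m : ℝ) ^ p := by ring
    _ ≤ _ := by gcongr

/-- Existence of a `p`-Query-Scheme of size at most
`⌈e·p·(p+1)²·ln(n^{2/p}·e·(n-2)/p)⌉`: a family `𝒬` of subsets of an
`n`-element vertex set such that for every pair of distinct vertices `u, v`
and every `p`-element set `W` disjoint from `{u, v}`, some `Q ∈ 𝒬` contains
`u` and `v` and avoids `W`. -/
theorem stmt_4 {V : Type*} [Fintype V] [DecidableEq V] (n p : ℕ)
    (hn : Fintype.card V = n) (hp : 1 ≤ p) (hpn : p ≤ n - 2) :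
    ∃ 𝒬 : Finset (Finset V),
      𝒬.card ≤ ⌈Real.exp 1 * p * ((p : ℝ) + 1) ^ 2 *
          Real.log ((n : ℝ) ^ ((2 : ℝ) / p) * Real.exp 1 * ((n : ℝ) - 2) / p)⌉₊ ∧
      ∀ u v : V, u ≠ v → ∀ W : Finset V, W.card = p → u ∉ W → v ∉ W →
        ∃ Q ∈ 𝒬, u ∈ Q ∧ v ∈ Q ∧ Disjoint W Q := by
  classical
  have hp0 : (0 : ℝ) < p := by exact_mod_cast hp
  obtain ⟨m, rfl⟩ : ∃ m, n = m + 2 := ⟨n - 2, by omega⟩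
  have hm : 1 ≤ m := by omega
  have hm0 : (0 : ℝ) < m := by exact_mod_cast hm
  have hcast : (((m + 2 : ℕ) : ℝ) - 2) = m := by push_cast; ring
  rw [hcast]
  set N : ℝ := ((m + 2 : ℕ) : ℝ) with hN
  have hN0 : 0 < N := by positivity
  set A : ℝ := N ^ ((2 : ℝ) / p) * Real.exp 1 * m / p with hA
  have hA0 : 0 < A := by positivity
  set k := ⌈Real.exp 1 * p * ((p : ℝ) + 1) ^ 2 * Real.log A⌉₊ with hk
  have hk' : Real.exp 1 * p * ((p : ℝ) + 1) ^ 2 * Real.log A ≤ k := Nat.le_ceil _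
  set q : ℝ := 1 / (Real.exp 1 * ((p : ℝ) + 1) ^ 2) with hq
  have hx0 : (0 : ℝ) ≤ 1 / ((p : ℝ) + 1) := by positivity
  have hx1 : 1 / ((p : ℝ) + 1) ≤ 1 := by rw [div_le_one (by positivity)]; linarith
  have hq1 : q ≤ 1 := by
    rw [hq, div_le_one (by positivity)]
    have := Real.add_one_le_exp (1 : ℝ)
    nlinarith
  let S : Finset (Σ _ : V × V, Finset V) := (Finset.univ : Finset V).offDiag.sigma
    (fun a => Finset.powersetCard p (Finset.univ \ {a.1, a.2}))
  have hS : S.card = ((m + 2) * (m + 2) - (m + 2)) * m.choose p := by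
    rw [Finset.card_sigma, Finset.sum_const_nat (m := m.choose p), Finset.offDiag_card,
      Finset.card_univ, hn]
    intro a ha
    rw [Finset.card_powersetCard, Finset.card_sdiff_of_subset (Finset.subset_univ _),
      Finset.card_univ, hn, Finset.card_pair (by simpa using ha)]
    rfl
  have hSlt : (S.card : ℝ) < A ^ p := by
    have hA' : A ^ p = N ^ 2 * (Real.exp 1 * m / p) ^ p := by
      have : A = N ^ ((2 : ℝ) / p) * (Real.exp 1 * m / p) := by rw [hA]; ring
      rw [this, mul_pow, ← Real.rpow_natCast (N ^ ((2 : ℝ) / p)), ← Real.rpow_mul hN0.le,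
        div_mul_cancel₀ _ hp0.ne']
      norm_num
    have h1 : ((m + 2) * (m + 2) - (m + 2)) < (m + 2) ^ 2 := by
      rw [sq]; exact Nat.sub_lt (by positivity) (by omega)
    have h2 : (((m + 2) * (m + 2) - (m + 2) : ℕ) : ℝ) < N ^ 2 := by
      rw [hN]; exact_mod_cast h1
    rw [hS, hA', Nat.cast_mul]
    exact mul_lt_mul h2 (qs_choose m p hp) (by exact_mod_cast Nat.choose_pos (by omega))
      (by positivity)
  obtain ⟨F, hF, hc⟩ := qs_greedy
    (fun Q : Finset V => (∏ _i ∈ Q, (1 / ((p : ℝ) + 1))) *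
      (∏ _i ∈ Finset.univ \ Q, (1 - 1 / ((p : ℝ) + 1))))
    (fun Q => mul_nonneg (Finset.prod_nonneg fun _ _ => hx0)
      (Finset.prod_nonneg fun _ _ => by linarith))
    (by
      rw [← Finset.powerset_univ, ← Finset.prod_add]
      simp)
    (fun (a : Σ _ : V × V, Finset V) Q => a.1.1 ∈ Q ∧ a.1.2 ∈ Q ∧ Disjoint a.2 Q) S q hq1
    (by
      rintro ⟨⟨u, v⟩, W⟩ ha
      simp only [S, Finset.mem_sigma, Finset.mem_offDiag, Finset.mem_powersetCard] at ha
      obtain ⟨⟨_, _, huv⟩, hW, hWc⟩ := ha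
      have hu : u ∉ W := fun h => by simpa using hW h
      have hv : v ∉ W := fun h => by simpa using hW h
      have := qs_weight _ hx0 hx1 u v huv W hu hv
      rw [hWc] at this
      exact (qs_prob p hp).trans this) k
  refine ⟨F, hF, ?_⟩
  have hpow : (1 - q) ^ k ≤ (A ^ p)⁻¹ := by
    calc (1 - q) ^ k ≤ (Real.exp (-q)) ^ k := by
          apply pow_le_pow_left₀ (by linarith)
          have := Real.add_one_le_exp (-q)
          linarith
      _ = Real.exp (-(k * q)) := by rw [← Real.exp_nat_mul]; ring_nf
      _ ≤ Real.exp (-(p * Real.log A)) := by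
          apply Real.exp_le_exp.2
          apply neg_le_neg
          rw [hq, mul_one_div, le_div_iff₀ (by positivity)]
          linarith
      _ = (A ^ p)⁻¹ := by
          rw [Real.exp_neg, Real.exp_nat_mul, Real.exp_log hA0]
  have hlt : (S.card : ℝ) * (1 - q) ^ k < 1 := by
    calc (S.card : ℝ) * (1 - q) ^ k ≤ S.card * (A ^ p)⁻¹ := by gcongr
      _ < 1 := by
        rw [← div_eq_mul_inv, div_lt_one (by positivity)]
        exact hSlt
  have hz := hc.trans_lt hlt
  have hz' : (S.filter (fun a => ∀ b ∈ F, ¬ (a.1.1 ∈ b ∧ a.1.2 ∈ b ∧ Disjoint a.2 b))).card = 0 := by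
    have := Nat.cast_lt_one.1 hz
    simpa using this
  intro u v huv W hW hu hv
  by_contra! hcon
  have hmem : (⟨(u, v), W⟩ : Σ _ : V × V, Finset V) ∈
      S.filter (fun a => ∀ b ∈ F, ¬ (a.1.1 ∈ b ∧ a.1.2 ∈ b ∧ Disjoint a.2 b)) := by
    simp only [S, Finset.mem_filter, Finset.mem_sigma, Finset.mem_offDiag,
      Finset.mem_powersetCard]
    refine ⟨⟨⟨Finset.mem_univ _, Finset.mem_univ _, huv⟩, ?_, hW⟩, ?_⟩
    · intro i hi
      simp only [Finset.mem_sdiff, Finset.mem_univ, true_and, Finset.mem_insert,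
        Finset.mem_singleton]
      rintro (rfl | rfl) <;> contradiction
    · rintro b hb ⟨h1, h2, h3⟩
      exact hcon b hb h1 h2 h3
  rw [Finset.card_eq_zero] at hz'
  rw [hz'] at hmem
  simp at hmem
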